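/- arXiv:1909.01310 — 2 statements merged into one kernel-verified Lean document; each statement's English description precedes it below -/
import Mathlib

section
/- Let u : ℝ → ℝ be C² with u'(y) ≥ 1/𝔘 and |u''(y)| ≤ 𝔘 u'(y) for all y, where 𝔘 ≥ 1. Let k ∈ ℕ, k ≥ 1, t > 0, and let f(x,y) = g(y) e^{ikx} + conj. be a smooth, rapidly decaying function localized at x-frequency ±k, with stream function ψ solving Δψ = f (periodic in x, decaying in y). Then k t ‖f‖_{Ḣ⁻¹} ≤ 2𝔘² (‖f‖_{L²} + ‖Jf‖_{L²}), where J = ∂_y + t u' ∂_x and ‖f‖_{Ḣ⁻¹} = ‖∇ψ‖_{L²}. -/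
open MeasureTheory

open scoped ComplexConjugate

lemma cs_aux (a b : ℝ → ℂ) (ha : MemLp a 2) (hb : MemLp b 2) :
    ∫ y, ‖a y‖ * ‖b y‖ ≤ Real.sqrt (∫ y, ‖a y‖^2) * Real.sqrt (∫ y, ‖b y‖^2) := by
  have h := integral_mul_norm_le_Lp_mul_Lq (μ := (volume : Measure ℝ)) (f := a) (g := b)
    (p := 2) (q := 2) (by constructor <;> norm_num) (by simpa using ha) (by simpa using hb)
  simpa [Real.sqrt_eq_rpow] using h

lemma int_aux (a b : ℝ → ℂ) (ha : MemLp a 2) (hb : MemLp b 2) :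
    Integrable (fun y => ‖a y‖ * ‖b y‖) := ha.norm.integrable_mul hb.norm

lemma int_aux' (a b : ℝ → ℂ) (ha : MemLp a 2) (hb : MemLp b 2) :
    Integrable (fun y => a y * conj (b y)) := by
  have := ha.integrable_mul (q := 2) hb.star
  exact this

/-- Lemma 3.2: for `f` localized at `x`-frequency `±k`, represented by its Fourier
coefficient `g(y)` with stream function coefficient `ψ` solving `ψ'' − k²ψ = g`,
one has `kt‖f‖_{Ḣ⁻¹} ≤ 2𝔘²(‖f‖ + ‖Jf‖)`, where
`‖f‖_{Ḣ⁻¹}² = ∫ (‖ψ'‖² + k²‖ψ‖²)`, `‖f‖² = ∫ ‖g‖²` and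
`Jf` has coefficient `g' + i k t u' g`. -/
theorem Hminus1_bound_via_vector_field (𝔘 : ℝ) (hU : 1 ≤ 𝔘)
    (u : ℝ → ℝ) (hu : ContDiff ℝ 2 u)
    (hu' : ∀ y : ℝ, 1 / 𝔘 ≤ deriv u y)
    (hu'' : ∀ y : ℝ, |deriv (deriv u) y| ≤ 𝔘 * deriv u y)
    (k : ℕ) (hk : 1 ≤ k) (t : ℝ) (ht : 0 < t)
    (g : ℝ → ℂ) (hg : ContDiff ℝ (⊤ : ℕ∞) g) (hgsupp : HasCompactSupport g)
    (ψ : ℝ → ℂ) (hψ : ContDiff ℝ (⊤ : ℕ∞) ψ)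
    (hstream : ∀ y : ℝ, deriv (deriv ψ) y - (k : ℝ)^2 * ψ y = g y)
    (hψint : Integrable (fun y : ℝ => ‖deriv ψ y‖^2 + (k : ℝ)^2 * ‖ψ y‖^2)) :
    (k : ℝ) * t * Real.sqrt (∫ y : ℝ, (‖deriv ψ y‖^2 + (k : ℝ)^2 * ‖ψ y‖^2))
      ≤ 2 * 𝔘^2 * (Real.sqrt (∫ y : ℝ, ‖g y‖^2)
          + Real.sqrt (∫ y : ℝ,
              ‖deriv g y + Complex.I * (k : ℂ) * (t : ℂ) * ((deriv u y : ℝ) : ℂ) * g y‖^2)) := by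
  have hk1 : (1:ℝ) ≤ k := by exact_mod_cast hk
  have hU0 : 0 < 𝔘 := by linarith
  have hup : ∀ y, 0 < deriv u y := fun y => lt_of_lt_of_le (by positivity) (hu' y)
  have hdψ : ∀ y, HasDerivAt ψ (deriv ψ y) y := fun y =>
    (hψ.differentiable (by simp) y).hasDerivAt
  have hψ1 : ContDiff ℝ (⊤ : ℕ∞) (deriv ψ) := ((contDiff_infty_iff_deriv).1 hψ).2
  have hddψ : ∀ y, HasDerivAt (deriv ψ) ((k:ℝ)^2 * ψ y + g y) y := fun y => by
    have := (hψ1.differentiable (by simp) y).hasDerivAt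
    rwa [show deriv (deriv ψ) y = (k:ℝ)^2 * ψ y + g y by rw [← hstream y]; ring] at this
  have hdg : ∀ y, HasDerivAt g (deriv g y) y := fun y =>
    (hg.differentiable (by simp) y).hasDerivAt
  have hg1 : ContDiff ℝ (⊤ : ℕ∞) (deriv g) := ((contDiff_infty_iff_deriv).1 hg).2
  have hu1 : ContDiff ℝ 1 (deriv u) :=
    ((contDiff_succ_iff_deriv (n := 1)).1 (by simpa [one_add_one_eq_two] using hu)).2.2
  have hdu : ∀ y, HasDerivAt (fun y => ((deriv u y : ℝ) : ℂ)) ((deriv (deriv u) y : ℝ) : ℂ) y :=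
    fun y => ((hu1.differentiable (by simp) y).hasDerivAt).ofReal_comp
  have hu2c : Continuous (deriv (deriv u)) := hu1.continuous_deriv (by simp)
  have hu1c := hu1.continuous
  -- L2 facts
  have mψ' : MemLp (deriv ψ) 2 := by
    rw [memLp_two_iff_integrable_sq_norm hψ1.continuous.aestronglyMeasurable]
    refine hψint.mono' (hψ1.continuous.norm.pow 2).aestronglyMeasurable (ae_of_all _ fun y => ?_)
    rw [Real.norm_of_nonneg (by positivity)]
    have : 0 ≤ (k:ℝ)^2 * ‖ψ y‖^2 := by positivity
    linarith
  have hle : ∀ y, ‖ψ y‖^2 ≤ ‖deriv ψ y‖^2 + (k:ℝ)^2 * ‖ψ y‖^2 := fun y => by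
    have h1 : (1:ℝ) ≤ (k:ℝ)^2 := one_le_pow₀ hk1
    nlinarith [sq_nonneg ‖deriv ψ y‖, sq_nonneg ‖ψ y‖]
  have mψ : MemLp ψ 2 := by
    rw [memLp_two_iff_integrable_sq_norm hψ.continuous.aestronglyMeasurable]
    refine hψint.mono' (hψ.continuous.norm.pow 2).aestronglyMeasurable (ae_of_all _ fun y => ?_)
    rw [Real.norm_of_nonneg (by positivity)]
    exact hle y
  have mg : MemLp g 2 := hg.continuous.memLp_of_hasCompactSupport hgsupp
  set J : ℝ → ℂ := fun y =>
    deriv g y + Complex.I * (k : ℂ) * (t : ℂ) * ((deriv u y : ℝ) : ℂ) * g y with hJ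
  have hJc : Continuous J := by
    have := hg1.continuous
    have := hg.continuous
    fun_prop
  have hJs : HasCompactSupport J := hgsupp.deriv.add (hgsupp.mul_left)
  have mJ : MemLp J 2 := hJc.memLp_of_hasCompactSupport hJs
  set E := ∫ y : ℝ, (‖deriv ψ y‖^2 + (k : ℝ)^2 * ‖ψ y‖^2) with hE
  have hE0 : 0 ≤ E := integral_nonneg fun y => by positivity
  have E1 : Real.sqrt (∫ y, ‖ψ y‖^2) ≤ Real.sqrt E := by
    apply Real.sqrt_le_sqrt
    exact integral_mono ((memLp_two_iff_integrable_sq_norm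
      hψ.continuous.aestronglyMeasurable).1 mψ) hψint hle
  have E2 : Real.sqrt (∫ y, ‖deriv ψ y‖^2) ≤ Real.sqrt E := by
    apply Real.sqrt_le_sqrt
    refine integral_mono ((memLp_two_iff_integrable_sq_norm
      hψ1.continuous.aestronglyMeasurable).1 mψ') hψint fun y => ?_
    have : 0 ≤ (k:ℝ)^2 * ‖ψ y‖^2 := by positivity
    show ‖deriv ψ y‖^2 ≤ _
    linarith
  -- energy identity
  have igψ := int_aux' g ψ mg mψ
  have hA : (E : ℂ) + ∫ y, g y * conj (ψ y) = 0 := by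
    have e : ∀ y, ((k:ℝ)^2 * ψ y + g y) * conj (ψ y) + deriv ψ y * conj (deriv ψ y)
        = ((‖deriv ψ y‖^2 + (k : ℝ)^2 * ‖ψ y‖^2 : ℝ) : ℂ) + g y * conj (ψ y) := fun y => by
      push_cast
      rw [← Complex.mul_conj', ← Complex.mul_conj']
      ring
    have h0 := integral_eq_zero_of_hasDerivAt_of_integrable
      (f := fun y => deriv ψ y * conj (ψ y))
      (f' := fun y => ((k:ℝ)^2 * ψ y + g y) * conj (ψ y) + deriv ψ y * conj (deriv ψ y))
      (fun y => (hddψ y).mul (hdψ y).star)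
      (by simp_rw [e]; exact hψint.ofReal.add igψ) (int_aux' _ _ mψ' mψ)
    simp_rw [e] at h0
    have iE : Integrable (fun y => ((‖deriv ψ y‖^2 + (k : ℝ)^2 * ‖ψ y‖^2 : ℝ) : ℂ)) :=
      hψint.ofReal
    rw [integral_add iE igψ, integral_complex_ofReal] at h0
    exact h0
  -- vector field identity
  set R : ℝ → ℂ := fun y => J y * conj (ψ y) / (deriv u y : ℝ)
    + g y * conj (deriv ψ y) / (deriv u y : ℝ)
    - g y * conj (ψ y) * (deriv (deriv u) y : ℝ) / (deriv u y : ℝ)^2 with hR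
  have hune : ∀ y, ((deriv u y : ℝ) : ℂ) ≠ 0 := fun y => by exact_mod_cast (hup y).ne'
  have hRc : Continuous R := by
    have := hg.continuous
    have := hψ.continuous
    have := hψ1.continuous
    have h1 : Continuous fun y => ((deriv u y : ℝ) : ℂ) := by fun_prop
    refine ((Continuous.div (by fun_prop) h1 hune).add (Continuous.div (by fun_prop) h1 hune)).sub
      (Continuous.div (by fun_prop) (h1.pow 2) fun y => pow_ne_zero _ (hune y))
  have hRb : ∀ y, ‖R y‖ ≤ 𝔘 * (‖J y‖ * ‖ψ y‖) + 𝔘 * (‖g y‖ * ‖deriv ψ y‖)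
      + 𝔘^2 * (‖g y‖ * ‖ψ y‖) := fun y => by
    have i1 : (deriv u y)⁻¹ ≤ 𝔘 := by
      rw [inv_le_comm₀ (hup y) hU0]; simpa using hu' y
    have i2 : |deriv (deriv u) y| * ((deriv u y)^2)⁻¹ ≤ 𝔘^2 := by
      calc |deriv (deriv u) y| * ((deriv u y)^2)⁻¹
          ≤ (𝔘 * deriv u y) * ((deriv u y)^2)⁻¹ := by
            gcongr; exact hu'' y
        _ = 𝔘 * (deriv u y)⁻¹ := by field_simp [(hup y).ne']
        _ ≤ 𝔘 * 𝔘 := by gcongr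
        _ = 𝔘^2 := by ring
    have n1 : ‖J y * conj (ψ y) / (deriv u y : ℝ)‖ ≤ 𝔘 * (‖J y‖ * ‖ψ y‖) := by
      rw [norm_div, norm_mul, RCLike.norm_conj, Complex.norm_real, Real.norm_of_nonneg (hup y).le,
        div_eq_mul_inv, mul_comm]
      gcongr
    have n2 : ‖g y * conj (deriv ψ y) / (deriv u y : ℝ)‖ ≤ 𝔘 * (‖g y‖ * ‖deriv ψ y‖) := by
      rw [norm_div, norm_mul, RCLike.norm_conj, Complex.norm_real, Real.norm_of_nonneg (hup y).le,
        div_eq_mul_inv, mul_comm]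
      gcongr
    have n3 : ‖g y * conj (ψ y) * (deriv (deriv u) y : ℝ) / (deriv u y : ℝ)^2‖
        ≤ 𝔘^2 * (‖g y‖ * ‖ψ y‖) := by
      rw [norm_div, norm_mul, norm_mul, RCLike.norm_conj, norm_pow, Complex.norm_real,
        Complex.norm_real, Real.norm_of_nonneg (hup y).le, Real.norm_eq_abs,
        div_eq_mul_inv, mul_assoc, mul_comm]
      gcongr
    exact (norm_sub_le _ _).trans (add_le_add ((norm_add_le _ _).trans (add_le_add n1 n2)) n3)
  have j1 := (int_aux J ψ mJ mψ).const_mul 𝔘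
  have j2 := (int_aux g (deriv ψ) mg mψ').const_mul 𝔘
  have j3 := (int_aux g ψ mg mψ).const_mul (𝔘^2)
  have iR : Integrable R := ((j1.add j2).add j3).mono' hRc.aestronglyMeasurable (ae_of_all _ hRb)
  have hB : (∫ y, R y) - Complex.I * k * t * ∫ y, g y * conj (ψ y) = 0 := by
    have i0 : Integrable fun y => R y - Complex.I * k * t * (g y * conj (ψ y)) :=
      iR.sub (igψ.const_mul _)
    have h0 := integral_eq_zero_of_hasDerivAt_of_integrable
      (f := fun y => g y * conj (ψ y) / (deriv u y : ℝ))
      (f' := fun y => R y - Complex.I * k * t * (g y * conj (ψ y)))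
      (fun y => by
        refine (((hdg y).mul (hdψ y).star).div (hdu y) (hune y)).congr_deriv ?_
        have := hune y
        simp only [hR, hJ, Complex.star_def, Pi.mul_apply]
        field_simp
        ring) i0
      (by
        refine Continuous.integrable_of_hasCompactSupport ?_ ?_
        · have := hg.continuous
          have := hψ.continuous
          exact Continuous.div (by fun_prop) (by fun_prop) hune
        · simp_rw [div_eq_mul_inv]
          exact (hgsupp.mul_right).mul_right)
    rw [integral_sub iR (igψ.const_mul _), integral_const_mul] at h0
    exact h0
  have hC : k * t * E = ‖∫ y, R y‖ := by
    have e1 : (∫ y, R y) = -(Complex.I * k * t * E) := by linear_combination hB + Complex.I * k * t * hA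
    rw [e1]
    simp [abs_of_pos ht, abs_of_nonneg hE0]
  set a := Real.sqrt (∫ y, ‖g y‖^2)
  set b := Real.sqrt (∫ y, ‖J y‖^2)
  have ha : 0 ≤ a := Real.sqrt_nonneg _
  have hb : 0 ≤ b := Real.sqrt_nonneg _
  have hs : 0 ≤ Real.sqrt E := Real.sqrt_nonneg _
  have hD : ‖∫ y, R y‖ ≤ 𝔘 * (b * √E) + 𝔘 * (a * √E) + 𝔘^2 * (a * √E) := by
    calc ‖∫ y, R y‖ ≤ ∫ y, (𝔘 * (‖J y‖ * ‖ψ y‖) + 𝔘 * (‖g y‖ * ‖deriv ψ y‖)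
      + 𝔘^2 * (‖g y‖ * ‖ψ y‖)) := norm_integral_le_of_norm_le ((j1.add j2).add j3) (ae_of_all _ hRb)
      _ = 𝔘 * (∫ y, ‖J y‖ * ‖ψ y‖) + 𝔘 * (∫ y, ‖g y‖ * ‖deriv ψ y‖)
          + 𝔘^2 * ∫ y, ‖g y‖ * ‖ψ y‖ := by
        have j12 : Integrable (fun y => 𝔘 * (‖J y‖ * ‖ψ y‖) + 𝔘 * (‖g y‖ * ‖deriv ψ y‖)) :=
          j1.add j2
        rw [integral_add j12 j3, integral_add j1 j2, integral_const_mul,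
          integral_const_mul, integral_const_mul]
      _ ≤ _ := by
        gcongr
        · exact (cs_aux _ _ mJ mψ).trans (by gcongr)
        · exact (cs_aux _ _ mg mψ').trans (by gcongr)
        · exact (cs_aux _ _ mg mψ).trans (by gcongr)
  rcases hs.eq_or_lt with h | h
  · rw [← h]; simp only [mul_zero]; positivity
  · refine le_of_mul_le_mul_right ?_ h
    have hEE : √E * √E = E := Real.mul_self_sqrt hE0
    have hUU : 𝔘 ≤ 𝔘^2 := by nlinarith
    calc k * t * √E * √E = k * t * E := by rw [mul_assoc, hEE]
      _ ≤ _ := hC.le.trans hD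
      _ ≤ 𝔘^2 * (b * √E) + 𝔘^2 * (a * √E) + 𝔘^2 * (a * √E) := by gcongr
      _ ≤ 2 * 𝔘^2 * (a + b) * √E := by
        have : 0 ≤ 𝔘^2 * (b * √E) := by positivity
        linarith
end

section
/- Let u ∈ C³(ℝ) satisfy 1/𝔘 ≤ u', |u''|/u' ≤ 𝔘, |u'''|/u' ≤ 𝔘 for some 𝔘 ≥ 1, and suppose f solves ∂_t f + u∂_x f = ν∂_{yy} f with ν = 0 (free transport). Let J = ∂_y + t u'∂_x and let f_k be the projection onto x-frequency band ±k, k ≥ 1. Then ‖f_k(t)‖² + ‖Jf_k(t)‖² = ‖f_k(0)‖² + ‖∂_y f_k(0)‖² for all t ≥ 0, and consequently (kt)²‖f_k(t)‖²_{Ḣ⁻¹} ≤ 4𝔘⁴(‖f_k(0)‖² + ‖∂_y f_k(0)‖²). -/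
open MeasureTheory

/-- Pointwise estimate. -/
lemma pointwise_est (U c K v w : ℝ) (hU : 1 ≤ U) (hc : 0 < c) (hK : 1 ≤ K)
    (hv : 1 / U ≤ v) (hw : |w| ≤ U * v) (g g' ψ p : ℂ) :
    c ^ 2 * (‖p‖ ^ 2 + K ^ 2 * ‖ψ‖ ^ 2) ≤
      3 * U ^ 4 * (‖g‖ ^ 2 + ‖g' + Complex.I * c * v * g‖ ^ 2)
      + 2 * c * (c * ((g + (K : ℂ) ^ 2 * ψ) * star ψ + p * star p).re
        - (Complex.I * (g' * ((v⁻¹ : ℝ) * star ψ)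
            + g * (((-w / v ^ 2 : ℝ) : ℂ) * star ψ + (v⁻¹ : ℝ) * star p))).re) := by
  have hU0 : 0 < U := by linarith
  have hv0 : 0 < v := lt_of_lt_of_le (by positivity) hv
  have hvi : v⁻¹ ≤ U := by
    rw [inv_le_comm₀ hv0 hU0]; simpa using hv
  have hUU : U ≤ U ^ 2 := by nlinarith
  set J := g' + Complex.I * c * v * g with hJ
  have hg' : g' = J - Complex.I * c * v * g := by rw [hJ]; ring
  have hvv : (v : ℂ) * ((v⁻¹ : ℝ) : ℂ) = 1 := by
    rw [← Complex.ofReal_mul, mul_inv_cancel₀ hv0.ne']; simp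
  have e1 : Complex.I * (g' * ((v⁻¹ : ℝ) * star ψ)
            + g * (((-w / v ^ 2 : ℝ) : ℂ) * star ψ + (v⁻¹ : ℝ) * star p))
      = c * (g * star ψ) + Complex.I * (J * ((v⁻¹ : ℝ) * star ψ)
            + g * (((-w / v ^ 2 : ℝ) : ℂ) * star ψ + (v⁻¹ : ℝ) * star p)) := by
    rw [hg']
    linear_combination (-Complex.I ^ 2 * c * g * star ψ) * hvv - c * g * star ψ * Complex.I_sq
  have e2 : ((g + (K : ℂ) ^ 2 * ψ) * star ψ + p * star p).re
      = (g * star ψ).re + (‖p‖ ^ 2 + K ^ 2 * ‖ψ‖ ^ 2) := by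
    have h1 : p * star p = ((‖p‖ ^ 2 : ℝ) : ℂ) := by
      push_cast; exact Complex.mul_conj' p
    have h2 : (g + (K : ℂ) ^ 2 * ψ) * star ψ = g * star ψ + ((K ^ 2 * ‖ψ‖ ^ 2 : ℝ) : ℂ) := by
      have := Complex.mul_conj' ψ
      push_cast
      rw [← this]
      simp only [Complex.star_def]
      ring
    rw [h1, h2]
    simp only [Complex.add_re, Complex.ofReal_re]
    ring
  set R := Complex.I * (J * ((v⁻¹ : ℝ) * star ψ)
            + g * (((-w / v ^ 2 : ℝ) : ℂ) * star ψ + (v⁻¹ : ℝ) * star p)) with hR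
  have hwv : |-w / v ^ 2| ≤ U ^ 2 := by
    rw [abs_div, abs_neg, abs_of_pos (by positivity : 0 < v ^ 2)]
    calc |w| / v ^ 2 ≤ U * v / v ^ 2 := by gcongr
      _ = U * v⁻¹ := by field_simp
      _ ≤ U * U := by gcongr
      _ = U ^ 2 := by ring
  have hvi2 : |v⁻¹| ≤ U ^ 2 := by
    rw [abs_of_pos (by positivity)]; linarith
  have hRn : R.re ≤ U ^ 2 * (‖J‖ * ‖ψ‖ + ‖g‖ * (‖ψ‖ + ‖p‖)) := by
    calc R.re ≤ ‖R‖ := Complex.re_le_norm R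
      _ ≤ ‖J‖ * (|v⁻¹| * ‖ψ‖) + ‖g‖ * (|-w / v ^ 2| * ‖ψ‖ + |v⁻¹| * ‖p‖) := by
        rw [hR, norm_mul, Complex.norm_I, one_mul]
        refine (norm_add_le _ _).trans ?_
        rw [norm_mul, norm_mul, norm_mul, Complex.norm_real, norm_star, Real.norm_eq_abs]
        gcongr
        refine (norm_add_le _ _).trans ?_
        rw [norm_mul, norm_mul, Complex.norm_real, Complex.norm_real, norm_star, norm_star,
          Real.norm_eq_abs, Real.norm_eq_abs]
      _ ≤ ‖J‖ * (U ^ 2 * ‖ψ‖) + ‖g‖ * (U ^ 2 * ‖ψ‖ + U ^ 2 * ‖p‖) := by gcongr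
      _ = _ := by ring
  rw [e1, e2, Complex.add_re, Complex.re_ofReal_mul]
  have hK2 : ‖ψ‖ ^ 2 ≤ K ^ 2 * ‖ψ‖ ^ 2 := by
    have : 1 ≤ K ^ 2 := by nlinarith
    nlinarith [sq_nonneg ‖ψ‖]
  have hK3 := mul_le_mul_of_nonneg_left hK2 (sq_nonneg c)
  have hR3 := mul_le_mul_of_nonneg_left hRn (by positivity : 0 ≤ 2 * c)
  nlinarith [sq_nonneg (c * ‖ψ‖ - U ^ 2 * (‖J‖ + ‖g‖)), sq_nonneg (c * ‖p‖ - U ^ 2 * ‖g‖),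
    mul_nonneg (pow_nonneg hU0.le 4) (sq_nonneg (‖J‖ - ‖g‖)),
    mul_nonneg (pow_nonneg hU0.le 4) (sq_nonneg ‖J‖)]

/-- The `H^{-1}` bound at fixed time. -/
lemma hminus_est (U c K : ℝ) (hU : 1 ≤ U) (hc : 0 < c) (hK : 1 ≤ K)
    (v w : ℝ → ℝ) (hv : ∀ y, 1 / U ≤ v y) (hw : ∀ y, |w y| ≤ U * v y)
    (hvd : ∀ y, HasDerivAt v (w y) y) (hwc : Continuous w)
    (g g' ψ p : ℝ → ℂ) (hg : ∀ y, HasDerivAt g (g' y) y) (hgc' : Continuous g')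
    (hgs : HasCompactSupport g) (hgs' : HasCompactSupport g')
    (hψ : ∀ y, HasDerivAt ψ (p y) y)
    (hp : ∀ y, HasDerivAt p (g y + (K : ℂ) ^ 2 * ψ y) y) :
    c ^ 2 * (∫ y, (‖p y‖ ^ 2 + K ^ 2 * ‖ψ y‖ ^ 2)) ≤
      3 * U ^ 4 * ((∫ y, ‖g y‖ ^ 2) + ∫ y, ‖g' y + Complex.I * c * v y * g y‖ ^ 2) := by
  have hU0 : 0 < U := by linarith
  have hv0 : ∀ y, 0 < v y := fun y => lt_of_lt_of_le (by positivity) (hv y)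
  by_cases hint : Integrable (fun y => ‖p y‖ ^ 2 + K ^ 2 * ‖ψ y‖ ^ 2)
  swap
  · rw [integral_undef hint, mul_zero]
    have h1 : 0 ≤ ∫ y, ‖g y‖ ^ 2 := integral_nonneg fun y => by positivity
    have h2 : 0 ≤ ∫ y, ‖g' y + Complex.I * c * v y * g y‖ ^ 2 :=
      integral_nonneg fun y => by positivity
    positivity
  have cg : Continuous g := continuous_iff_continuousAt.2 fun y => (hg y).continuousAt
  have cψ : Continuous ψ := continuous_iff_continuousAt.2 fun y => (hψ y).continuousAt
  have cp : Continuous p := continuous_iff_continuousAt.2 fun y => (hp y).continuousAt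
  have cv : Continuous v := continuous_iff_continuousAt.2 fun y => (hvd y).continuousAt
  have cvi : Continuous (fun y => (v y)⁻¹) := cv.inv₀ fun y => (hv0 y).ne'
  have cwv : Continuous (fun y => -w y / (v y) ^ 2) :=
    hwc.neg.div (cv.pow 2) fun y => (pow_pos (hv0 y) 2).ne'
  have i1 : Integrable (fun y => ‖g y‖ ^ 2) := by
    refine Continuous.integrable_of_hasCompactSupport (by fun_prop) ?_
    exact hgs.comp_left (g := fun z : ℂ => ‖z‖ ^ 2) (by simp)
  have i2 : Integrable (fun y => ‖g' y + Complex.I * c * v y * g y‖ ^ 2) := by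
    refine Continuous.integrable_of_hasCompactSupport (by fun_prop) ?_
    exact (hgs'.add (hgs.mul_left)).comp_left (g := fun z : ℂ => ‖z‖ ^ 2) (by simp)
  have d1 : ∀ y, HasDerivAt (fun y => p y * star (ψ y))
      ((g y + (K : ℂ) ^ 2 * ψ y) * star (ψ y) + p y * star (p y)) y :=
    fun y => (hp y).mul (hψ y).star
  have j1 : Integrable (fun y => p y * star (ψ y)) := by
    refine hint.mono' (by fun_prop) (Filter.Eventually.of_forall fun y => ?_)
    rw [norm_mul, norm_star]
    have : 1 ≤ K ^ 2 := by nlinarith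
    nlinarith [sq_nonneg (‖p y‖ - ‖ψ y‖), sq_nonneg ‖ψ y‖, sq_nonneg ‖p y‖]
  have j1' : Integrable (fun y => (g y + (K : ℂ) ^ 2 * ψ y) * star (ψ y) + p y * star (p y)) := by
    have a1 : Integrable (fun y => g y * star (ψ y)) :=
      Continuous.integrable_of_hasCompactSupport (by fun_prop) hgs.mul_right
    have a2 := a1.add hint.ofReal
    refine a2.congr (Filter.Eventually.of_forall fun y => ?_)
    have h1 := Complex.mul_conj' (ψ y)
    have h2 := Complex.mul_conj' (p y)
    simp only [Pi.add_apply, Complex.star_def]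
    push_cast
    simp only [Complex.coe_algebraMap]
    rw [← h1, ← h2]
    ring
  have z1 := integral_eq_zero_of_hasDerivAt_of_integrable d1 j1' j1
  have d2 : ∀ y, HasDerivAt (fun y => g y * (((v y)⁻¹ : ℝ) * star (ψ y)))
      (g' y * (((v y)⁻¹ : ℝ) * star (ψ y))
        + g y * (((-w y / v y ^ 2 : ℝ) : ℂ) * star (ψ y) + ((v y)⁻¹ : ℝ) * star (p y))) y :=
    fun y => (hg y).mul ((((hvd y).fun_inv (hv0 y).ne').ofReal_comp).mul (hψ y).star)
  have j2 : Integrable (fun y => g y * (((v y)⁻¹ : ℝ) * star (ψ y))) :=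
    Continuous.integrable_of_hasCompactSupport (by fun_prop) hgs.mul_right
  have j2' : Integrable (fun y => g' y * (((v y)⁻¹ : ℝ) * star (ψ y))
        + g y * (((-w y / v y ^ 2 : ℝ) : ℂ) * star (ψ y) + ((v y)⁻¹ : ℝ) * star (p y))) :=
    Continuous.integrable_of_hasCompactSupport (by fun_prop) (hgs'.mul_right.add hgs.mul_right)
  have z2 := integral_eq_zero_of_hasDerivAt_of_integrable d2 j2' j2
  have hza : ∫ y, ((g y + (K : ℂ) ^ 2 * ψ y) * star (ψ y) + p y * star (p y)).re = 0 := by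
    have := integral_re j1'
    simp only [RCLike.re_eq_complex_re] at this
    rw [this, z1]; simp
  have j3 := j2'.const_mul Complex.I
  have hzb : ∫ y, (Complex.I * (g' y * (((v y)⁻¹ : ℝ) * star (ψ y))
        + g y * (((-w y / v y ^ 2 : ℝ) : ℂ) * star (ψ y) + ((v y)⁻¹ : ℝ) * star (p y)))).re = 0 := by
    have := integral_re j3
    simp only [RCLike.re_eq_complex_re] at this
    rw [this, integral_const_mul, z2]; simp
  have r1 := j1'.re
  have r2 := j3.re
  simp only [RCLike.re_eq_complex_re] at r1 r2
  have mono := integral_mono (hint.const_mul (c ^ 2))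
    (((i1.add i2).const_mul (3 * U ^ 4)).add (((r1.const_mul c).sub r2).const_mul (2 * c)))
    (fun y => pointwise_est U c K (v y) (w y) hU hc hK (hv y) (hw y) (g y) (g' y) (ψ y) (p y))
  rw [integral_const_mul] at mono
  refine mono.trans (le_of_eq ?_)
  rw [integral_add' ((i1.add i2).const_mul (3 * U ^ 4))
    (((r1.const_mul c).sub r2).const_mul (2 * c)), integral_const_mul, integral_const_mul,
    integral_add' i1 i2, integral_sub' (r1.const_mul c) r2, integral_const_mul, hza, hzb]
  ring

/-- Inviscid mixing via the vector field: for free transport (`ν = 0`) at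
`x`-frequency band `±k` (Fourier coefficient `g(t,y)` solving `∂_t g + iku g = 0`,
with stream function coefficient `ψ` solving `∂_yy ψ − k²ψ = g`), the quantity
`‖f_k‖² + ‖Jf_k‖² = ∫‖g‖² + ∫‖∂_y g + iktu' g‖²` is conserved, and
`(kt)²‖f_k(t)‖²_{Ḣ⁻¹} ≤ 4𝔘⁴(‖f_k(0)‖² + ‖∂_y f_k(0)‖²)`. -/
theorem inviscid_mixing_vector_field (𝔘 : ℝ) (hU : 1 ≤ 𝔘)
    (u : ℝ → ℝ) (hu : ContDiff ℝ 3 u)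
    (hu' : ∀ y : ℝ, 1 / 𝔘 ≤ deriv u y)
    (hu'' : ∀ y : ℝ, |deriv (deriv u) y| ≤ 𝔘 * deriv u y)
    (hu''' : ∀ y : ℝ, |deriv (deriv (deriv u)) y| ≤ 𝔘 * deriv u y)
    (k : ℕ) (hk : 1 ≤ k)
    (g : ℝ → ℝ → ℂ) (hg : ContDiff ℝ (⊤ : ℕ∞) (fun p : ℝ × ℝ => g p.1 p.2))
    (hgsupp : ∀ t : ℝ, HasCompactSupport (g t))
    (hpde : ∀ t y : ℝ,
      deriv (fun s => g s y) t + Complex.I * (k : ℂ) * ((u y : ℝ) : ℂ) * g t y = 0)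
    (ψ : ℝ → ℝ → ℂ) (hψ : ContDiff ℝ (⊤ : ℕ∞) (fun p : ℝ × ℝ => ψ p.1 p.2))
    (hstream : ∀ t y : ℝ,
      deriv (fun z => deriv (fun w => ψ t w) z) y - (k : ℝ)^2 * ψ t y = g t y) :
    ∀ t : ℝ, 0 ≤ t →
      ((∫ y : ℝ, ‖g t y‖^2)
          + ∫ y : ℝ, ‖deriv (fun z => g t z) y
              + Complex.I * (k : ℂ) * (t : ℂ) * ((deriv u y : ℝ) : ℂ) * g t y‖^2)
        = ((∫ y : ℝ, ‖g 0 y‖^2) + ∫ y : ℝ, ‖deriv (fun z => g 0 z) y‖^2) ∧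
      ((k : ℝ) * t)^2 *
          (∫ y : ℝ, (‖deriv (fun z => ψ t z) y‖^2 + (k : ℝ)^2 * ‖ψ t y‖^2))
        ≤ 4 * 𝔘^4 *
            ((∫ y : ℝ, ‖g 0 y‖^2) + ∫ y : ℝ, ‖deriv (fun z => g 0 z) y‖^2) := by
  have hgd : Differentiable ℝ (fun p : ℝ × ℝ => g p.1 p.2) := hg.differentiable (by simp)
  have hud : Differentiable ℝ u := hu.differentiable (by norm_num)
  have hgt : ∀ t, ContDiff ℝ (⊤ : ℕ∞) (g t) := fun t =>
    hg.comp (f := fun y : ℝ => (t, y)) (by fun_prop)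
  have hψt : ∀ t, ContDiff ℝ (⊤ : ℕ∞) (ψ t) := fun t =>
    hψ.comp (f := fun y : ℝ => (t, y)) (by fun_prop)
  have hgs : ∀ y, Differentiable ℝ (fun s => g s y) := fun y =>
    hgd.comp (f := fun s : ℝ => (s, y)) (by fun_prop)
  have hsol : ∀ t y, g t y = Complex.exp (-(Complex.I * k * u y * t)) * g 0 y := by
    intro t y
    have hd : ∀ s : ℝ, HasDerivAt (fun s : ℝ => Complex.exp (Complex.I * k * u y * s) * g s y)
        0 s := by
      intro s
      have h1 : HasDerivAt (fun s : ℝ => Complex.I * k * u y * (s : ℂ))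
          (Complex.I * k * u y * 1) s :=
        ((hasDerivAt_id s).ofReal_comp).const_mul _
      have h2 := h1.cexp.mul ((hgs y) s).hasDerivAt
      refine h2.congr_deriv ?_
      linear_combination Complex.exp (Complex.I * k * u y * s) * hpde s y
    have hc := is_const_of_deriv_eq_zero (fun s => (hd s).differentiableAt)
      (fun s => (hd s).deriv) t 0
    simp only [Complex.ofReal_zero, mul_zero, Complex.exp_zero, one_mul] at hc
    rw [← hc, ← mul_assoc, ← Complex.exp_add]
    simp
  have hnexp : ∀ t y : ℝ, ‖Complex.exp (-(Complex.I * k * u y * t))‖ = 1 := by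
    intro t y
    rw [Complex.norm_exp]
    simp
  have hJ : ∀ t y : ℝ, deriv (fun z => g t z) y
      + Complex.I * (k : ℂ) * (t : ℂ) * ((deriv u y : ℝ) : ℂ) * g t y
      = Complex.exp (-(Complex.I * k * u y * t)) * deriv (fun z => g 0 z) y := by
    intro t y
    have h1 : HasDerivAt (fun z : ℝ => -(Complex.I * k * u z * t))
        (-(Complex.I * k * (deriv u y : ℝ) * t)) y :=
      ((((hud y).hasDerivAt).ofReal_comp.const_mul _).mul_const _).neg
    have h2 := h1.cexp.mul (((hgt 0).differentiable (by simp)) y).hasDerivAt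
    have h3 : (fun z => g t z) = fun z => Complex.exp (-(Complex.I * k * u z * t)) * g 0 z :=
      funext fun z => hsol t z
    have h4 := h2.deriv
    change deriv (fun z => Complex.exp (-(Complex.I * k * u z * t)) * g 0 z) y = _ at h4
    rw [← h3] at h4
    rw [h4, hsol t y]
    ring
  intro t ht
  have hcons : ((∫ y : ℝ, ‖g t y‖^2)
          + ∫ y : ℝ, ‖deriv (fun z => g t z) y
              + Complex.I * (k : ℂ) * (t : ℂ) * ((deriv u y : ℝ) : ℂ) * g t y‖^2)
        = ((∫ y : ℝ, ‖g 0 y‖^2) + ∫ y : ℝ, ‖deriv (fun z => g 0 z) y‖^2) := by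
    congr 1
    · refine integral_congr_ae (Filter.Eventually.of_forall fun y => ?_)
      simp only
      rw [hsol t y, norm_mul, hnexp, one_mul]
    · refine integral_congr_ae (Filter.Eventually.of_forall fun y => ?_)
      simp only
      rw [hJ t y, norm_mul, hnexp, one_mul]
  refine ⟨hcons, ?_⟩
  rw [← hcons]
  have hA : 0 ≤ ((∫ y : ℝ, ‖g t y‖^2)
          + ∫ y : ℝ, ‖deriv (fun z => g t z) y
              + Complex.I * (k : ℂ) * (t : ℂ) * ((deriv u y : ℝ) : ℂ) * g t y‖^2) :=
    add_nonneg (integral_nonneg fun y => by positivity) (integral_nonneg fun y => by positivity)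
  have hU0 : 0 < 𝔘 := by linarith
  have hU4 : 0 < 𝔘 ^ 4 := by positivity
  have hk1 : (1 : ℝ) ≤ k := by exact_mod_cast hk
  rcases ht.eq_or_lt with rfl | htpos
  · have : ((k : ℝ) * 0) ^ 2 = 0 := by simp
    rw [this, zero_mul]
    positivity
  have hu2 : ContDiff ℝ 2 (deriv u) := by
    have : ContDiff ℝ (2 + 1) u := by
      convert hu using 1
      norm_num
    exact (contDiff_succ_iff_deriv.1 this).2.2
  have hψ1 : ContDiff ℝ (⊤ : ℕ∞) (deriv (ψ t)) := by
    exact (contDiff_infty_iff_deriv.1 (hψt t)).2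
  have key := hminus_est 𝔘 (k * t) k hU (by positivity) hk1 (deriv u) (deriv (deriv u)) hu' hu''
    (fun y => (hu2.differentiable (by norm_num) y).hasDerivAt)
    (hu2.continuous_deriv (by norm_num))
    (g t) (deriv (g t)) (ψ t) (deriv (ψ t))
    (fun y => ((hgt t).differentiable (by simp) y).hasDerivAt)
    ((hgt t).continuous_deriv (by simp)) (hgsupp t) (hgsupp t).deriv
    (fun y => ((hψt t).differentiable (by simp) y).hasDerivAt)
    (fun y => by
      have h := (hψ1.differentiable (by simp) y).hasDerivAt
      refine h.congr_deriv ?_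
      have h2 := hstream t y
      push_cast at h2 ⊢
      rw [← h2]
      exact (sub_add_cancel _ _).symm)
  have e : ∀ y, deriv (g t) y + Complex.I * ((k * t : ℝ) : ℂ) * (deriv u y : ℝ) * g t y
     = deriv (fun z => g t z) y
              + Complex.I * (k : ℂ) * (t : ℂ) * ((deriv u y : ℝ) : ℂ) * g t y := by
    intro y; push_cast; ring
  simp only [e] at key
  refine key.trans ?_
  gcongr
  norm_num
end
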